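/- Let G be a one-sided group shift on a finite group Γ. Then the sequence (|ker(π_i : G[i] → G[i-1])|)_{i≥1} is non-increasing, hence eventually constant with eventual value ld(G); and if n ≥ 1 is the smallest index with |ker(π_n : G[n] → G[n-1])| = ld(G), then G is an n-step group shift of finite type (with defining subgroup H = G[n] ≤ Γ^{n+1}). -/

import Mathlib

open Function Set Filter

/-- The one-sided shift map on sequences. -/
def oneShift {A : Type*} (a : ℕ → A) : ℕ → A := fun n => a (n + 1)

/-- `blocks G m` is the set of blocks of length `m` occurring in elements of `G`,
i.e. the image of `G` under the projection `Γ^ℕ → Γ^m`. -/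
def blocks {Γ : Type*} [Group Γ] (G : Subgroup (ℕ → Γ)) (m : ℕ) : Set (Fin m → Γ) :=
  (fun g : ℕ → Γ => fun k : Fin m => g k) '' (G : Set (ℕ → Γ))

/-- `kerCard G i` is the cardinality of the kernel of the truncation map
`π_i : G[i] → G[i-1]`, i.e. the number of blocks of length `i+1` occurring in `G` whose
first `i` entries are `1`. -/
noncomputable def kerCard {Γ : Type*} [Group Γ] (G : Subgroup (ℕ → Γ)) (i : ℕ) : ℕ :=
  Nat.card {b : Fin (i + 1) → Γ |
    b ∈ blocks G (i + 1) ∧ ∀ k : Fin (i + 1), (k : ℕ) < i → b k = 1}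

/-!
Reading off the last coordinate identifies `ker π_i` with a subgroup `L i` of `Γ`: the entries `g i`
of those `g ∈ G` that are trivial before position `i`. Shifting such a `g` shows that `L` is
decreasing, so `|ker π_n| = ld(G)` forces `L m = L n` for all `m ≥ n`.

Suppose every block of length `n + 1` of a sequence `g` occurs in `G`, and `h ∈ G` agrees with `g`
before position `m ≥ n`. Comparing the blocks of `h` and `g` that end at `m` gives
`(h m)⁻¹ * g m ∈ L n = L m`, so some `w ∈ G` trivial before `m` corrects `h`: the product `h * w`
agrees with `g` up to and including `m`. Hence `g` is a limit of elements of `G`.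
-/

theorem oneShift_iterate {A : Type*} (a : ℕ → A) (i : ℕ) :
    oneShift^[i] a = fun k => a (i + k) := by
  induction i generalizing a with
  | zero => simp
  | succ i ih =>
    funext k
    simp only [iterate_succ_apply, ih, oneShift, add_right_comm]

theorem mem_of_isClosed_of_forall_exists_eqOn_Iio {X : Type*} [TopologicalSpace X]
    {S : Set (ℕ → X)} (hS : IsClosed S) {x : ℕ → X}
    (hx : ∀ m, ∃ y ∈ S, EqOn y x (Iio m)) : x ∈ S := by
  choose y hyS hyx using hx
  refine hS.mem_of_tendsto (f := y) (b := atTop) ?_ (Eventually.of_forall hyS)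
  rw [tendsto_pi_nhds]
  intro k
  apply tendsto_const_nhds.congr'
  filter_upwards [eventually_gt_atTop k] with m hm using (hyx m hm).symm

theorem exists_eventually_eq_of_antitoneOn_Ici {α : Type*} [PartialOrder α] [WellFoundedLT α]
    {f : ℕ → α} {a : ℕ} (hf : AntitoneOn f (Ici a)) :
    ∃ d, ∀ᶠ i in atTop, f i = d := by
  let shifted : ℕ →o αᵒᵈ :=
    ⟨fun i => OrderDual.toDual (f (a + i)), fun i j hij => hf (by simp) (by simp) (by simpa)⟩
  obtain ⟨N, hN⟩ := WellFoundedGT.monotone_chain_condition shifted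
  refine ⟨f (a + N), ?_⟩
  filter_upwards [eventually_ge_atTop (a + N)] with i hi
  obtain ⟨j, rfl⟩ := Nat.exists_eq_add_of_le hi
  rw [add_assoc]
  exact congrArg OrderDual.ofDual (hN (N + j) (N.le_add_right j)).symm

section GroupShift

variable {Γ : Type*} [Group Γ] {G : Subgroup (ℕ → Γ)}

/-- The group `G[m - 1] ≤ Γ^m` of blocks of length `m` occurring in `G`; its carrier is
`blocks G m`. -/
def blockSubgroup (G : Subgroup (ℕ → Γ)) (m : ℕ) : Subgroup (Fin m → Γ) :=
  G.map (MonoidHom.pi fun k : Fin m => Pi.evalMonoidHom (fun _ => Γ) (k : ℕ))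

theorem coe_blockSubgroup (m : ℕ) : (blockSubgroup G m : Set (Fin m → Γ)) = blocks G m := rfl

/-- The kernel of `π_i : G[i] → G[i-1]`, viewed inside `Γ` through its last coordinate, the only one
that can be nontrivial: the entries `g i` of the elements `g` of `G` that are trivial before
position `i`. -/
def leadingSubgroup (G : Subgroup (ℕ → Γ)) (i : ℕ) : Subgroup Γ :=
  (G ⊓ ⨅ k < i, (Pi.evalMonoidHom (fun _ => Γ) k).ker).map (Pi.evalMonoidHom (fun _ => Γ) i)

theorem mem_leadingSubgroup {i : ℕ} {x : Γ} :
    x ∈ leadingSubgroup G i ↔ ∃ g ∈ G, (∀ k < i, g k = 1) ∧ g i = x := by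
  simp [leadingSubgroup, Subgroup.mem_iInf, MonoidHom.mem_ker, and_assoc]

theorem kerCard_eq_card_leadingSubgroup (G : Subgroup (ℕ → Γ)) (i : ℕ) :
    kerCard G i = Nat.card (leadingSubgroup G i) := by
  refine Set.ncard_congr (fun b _ => b (Fin.last i)) ?_ ?_ ?_
  · rintro _ ⟨⟨g, hg, rfl⟩, hg_one⟩
    exact mem_leadingSubgroup.2 ⟨g, hg, fun k hk => hg_one ⟨k, hk.trans i.lt_succ_self⟩ hk, rfl⟩
  · rintro b c ⟨-, hb⟩ ⟨-, hc⟩ hlast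
    funext k
    induction k using Fin.lastCases with
    | last => exact hlast
    | cast k => rw [hb _ k.is_lt, hc _ k.is_lt]
  · intro x hx
    obtain ⟨g, hg, hg_one, rfl⟩ := mem_leadingSubgroup.1 hx
    exact ⟨fun k => g k, ⟨⟨g, hg, rfl⟩, fun k hk => hg_one k hk⟩, rfl⟩

theorem shift_mem_of_stable (hstable : ∀ g ∈ G, oneShift g ∈ G) {g : ℕ → Γ} (hg : g ∈ G)
    (i : ℕ) : (fun k => g (i + k)) ∈ G :=
  oneShift_iterate g i ▸ MapsTo.iterate (s := (G : Set (ℕ → Γ))) hstable i hg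

theorem leadingSubgroup_antitone (hstable : ∀ g ∈ G, oneShift g ∈ G) :
    Antitone (leadingSubgroup G) := by
  refine antitone_nat_of_succ_le fun i x hx => ?_
  obtain ⟨g, hg, hg_one, rfl⟩ := mem_leadingSubgroup.1 hx
  exact mem_leadingSubgroup.2
    ⟨oneShift g, hstable g hg, fun k hk => hg_one (k + 1) (Nat.succ_lt_succ hk), rfl⟩

theorem finite_leadingSubgroup_of_le (hstable : ∀ g ∈ G, oneShift g ∈ G) {a i : ℕ}
    [Finite (leadingSubgroup G a)] (hi : a ≤ i) :
    Finite (leadingSubgroup G i) :=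
  Finite.of_injective _ (Subgroup.inclusion_injective (leadingSubgroup_antitone hstable hi))

theorem kerCard_antitoneOn (hstable : ∀ g ∈ G, oneShift g ∈ G) {a : ℕ}
    [Finite (leadingSubgroup G a)] : AntitoneOn (kerCard G) (Ici a) := by
  intro i hi j _ hij
  have := finite_leadingSubgroup_of_le hstable hi
  simp only [kerCard_eq_card_leadingSubgroup]
  exact Subgroup.card_le_of_le (leadingSubgroup_antitone hstable hij)

theorem leadingSubgroup_le_of_eventually_kerCard_eq
    (hstable : ∀ g ∈ G, oneShift g ∈ G) {n : ℕ} [Finite (leadingSubgroup G n)]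
    (hn : ∀ᶠ i in atTop, kerCard G i = kerCard G n) (m : ℕ) :
    leadingSubgroup G n ≤ leadingSubgroup G m := by
  have hanti := leadingSubgroup_antitone hstable
  obtain ⟨i, hi, hni, hmi⟩ :=
    (hn.and ((eventually_ge_atTop n).and (eventually_ge_atTop m))).exists
  simp only [kerCard_eq_card_leadingSubgroup] at hi
  exact (Subgroup.eq_of_le_of_card_ge (hanti hni) hi.ge).ge.trans (hanti hmi)

theorem inv_mul_mem_leadingSubgroup (hstable : ∀ g ∈ G, oneShift g ∈ G) {n i : ℕ}
    {g h : ℕ → Γ} (hh : h ∈ G) (hhg : EqOn h g (Iio (i + n)))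
    (hblock : (fun k : Fin (n + 1) => g (i + k)) ∈ blocks G (n + 1)) :
    (h (i + n))⁻¹ * g (i + n) ∈ leadingSubgroup G n := by
  obtain ⟨f, hf, hfg⟩ := hblock
  have hf_apply (k : ℕ) (hk : k ≤ n) : f k = g (i + k) := congrFun hfg ⟨k, Nat.lt_succ_of_le hk⟩
  refine mem_leadingSubgroup.2
    ⟨_, G.mul_mem (G.inv_mem (shift_mem_of_stable hstable hh i)) hf, fun k hk => ?_, ?_⟩
  · have hhg_k : h (i + k) = g (i + k) := hhg (Nat.add_lt_add_left hk i)
    simp [hf_apply k hk.le, hhg_k]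
  · simp [hf_apply n le_rfl]

theorem exists_mem_eqOn_Iio_of_forall_block_mem
    (hstable : ∀ g ∈ G, oneShift g ∈ G) {n : ℕ}
    (hle : ∀ m, leadingSubgroup G n ≤ leadingSubgroup G m) {g : ℕ → Γ}
    (hblocks : ∀ i, (fun k : Fin (n + 1) => g (i + k)) ∈ blocks G (n + 1)) (i : ℕ) :
    ∃ h ∈ G, EqOn h g (Iio (i + n)) := by
  induction i with
  | zero =>
    obtain ⟨f, hf, hfg⟩ := hblocks 0
    refine ⟨f, hf, fun k hk => ?_⟩
    simpa using congrFun hfg ⟨k, by grind⟩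
  | succ i ih =>
    obtain ⟨h, hh, hhg⟩ := ih
    obtain ⟨w, hw, hw_one, hw_last⟩ := mem_leadingSubgroup.1
      (hle (i + n) (inv_mul_mem_leadingSubgroup hstable hh hhg (hblocks i)))
    refine ⟨h * w, G.mul_mem hh hw, fun k hk => ?_⟩
    have hk' : k < i + n ∨ k = i + n := by grind
    rcases hk' with hk | rfl
    · simp [hw_one k hk, hhg hk]
    · simp [hw_last]

theorem mem_iff_forall_block_mem [TopologicalSpace Γ]
    (hstable : ∀ g ∈ G, oneShift g ∈ G) (hclosed : IsClosed (G : Set (ℕ → Γ)))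
    {n : ℕ} (hle : ∀ m, leadingSubgroup G n ≤ leadingSubgroup G m) {g : ℕ → Γ} :
    g ∈ G ↔ ∀ i, (fun k : Fin (n + 1) => g (i + k)) ∈ blocks G (n + 1) := by
  refine ⟨fun hg i => ⟨_, shift_mem_of_stable hstable hg i, rfl⟩, fun hblocks => ?_⟩
  refine mem_of_isClosed_of_forall_exists_eqOn_Iio hclosed fun m => ?_
  obtain ⟨h, hh, hhg⟩ := exists_mem_eqOn_Iio_of_forall_block_mem hstable hle hblocks m
  exact ⟨h, hh, hhg.mono (Iio_subset_Iio (Nat.le_add_right m n))⟩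

end GroupShift

theorem kerCard_antitone_and_nStep_general
    {Γ : Type*} [Group Γ] [TopologicalSpace Γ]
    (G : Subgroup (ℕ → Γ)) [Finite (leadingSubgroup G 1)]
    (hclosed : IsClosed (G : Set (ℕ → Γ))) (hstable : ∀ g ∈ G, oneShift g ∈ G) :
    (∀ i : ℕ, 1 ≤ i → kerCard G (i + 1) ≤ kerCard G i) ∧
    ∃ d : ℕ, (∀ᶠ i in atTop, kerCard G i = d) ∧
      ∀ n : ℕ, 1 ≤ n → kerCard G n = d →
        ∃ H : Subgroup (Fin (n + 1) → Γ),
          (H : Set (Fin (n + 1) → Γ)) = blocks G (n + 1) ∧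
          ∀ g : ℕ → Γ, g ∈ G ↔ ∀ i : ℕ, (fun k : Fin (n + 1) => g (i + (k : ℕ))) ∈ H := by
  have hanti : AntitoneOn (kerCard G) (Ici 1) := kerCard_antitoneOn hstable
  obtain ⟨d, hd⟩ := exists_eventually_eq_of_antitoneOn_Ici hanti
  refine ⟨fun i hi => hanti hi (hi.trans i.le_succ) i.le_succ, d, hd, ?_⟩
  rintro n hn rfl
  have := finite_leadingSubgroup_of_le hstable hn
  have hle := leadingSubgroup_le_of_eventually_kerCard_eq hstable hd
  exact ⟨blockSubgroup G (n + 1), coe_blockSubgroup _,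
    fun _ => mem_iff_forall_block_mem hstable hclosed hle⟩

/-- Let `G` be a one-sided group shift on a finite group `Γ`. Then the
sequence `(|ker π_i|)_{i ≥ 1}` is non-increasing, hence eventually constant with eventual
value `ld(G)`; and if `n ≥ 1` is the smallest index with `|ker π_n| = ld(G)`, then `G` is
an `n`-step group shift of finite type, with defining subgroup `H = G[n] ≤ Γ^{n+1}`. -/
theorem kerCard_antitone_and_nStep
    {Γ : Type*} [Group Γ] [Finite Γ] [TopologicalSpace Γ] [DiscreteTopology Γ]
    (G : Subgroup (ℕ → Γ)) (hclosed : IsClosed (G : Set (ℕ → Γ)))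
    (hstable : ∀ g ∈ G, oneShift g ∈ G) :
    (∀ i : ℕ, 1 ≤ i → kerCard G (i + 1) ≤ kerCard G i) ∧
    ∃ d : ℕ, (∀ᶠ i in atTop, kerCard G i = d) ∧
      ∀ n : ℕ, 1 ≤ n → kerCard G n = d → (∀ m : ℕ, 1 ≤ m → m < n → kerCard G m ≠ d) →
        ∃ H : Subgroup (Fin (n + 1) → Γ),
          (H : Set (Fin (n + 1) → Γ)) = blocks G (n + 1) ∧
          ∀ g : ℕ → Γ, g ∈ G ↔ ∀ i : ℕ, (fun k : Fin (n + 1) => g (i + (k : ℕ))) ∈ H := by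
  obtain ⟨hanti, d, hd, hstep⟩ := kerCard_antitone_and_nStep_general G hclosed hstable
  exact ⟨hanti, d, hd, fun n hn hnd _ => hstep n hn hnd⟩
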